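/- Let H ⊆ (ℙ¹)ⁿ be an irreducible hypersurface and j ∈ {1,…,n} be such that p_j(H) ≠ (ℙ¹)^{n-1}. Then p_j(H) ⊆ (ℙ¹)^{n-1} is an irreducible hypersurface and H = p_j^{-1}(p_j(H)); in particular H is isomorphic to the product of ℙ¹ with an irreducible hypersurface of (ℙ¹)^{n-1}. -/

import Mathlib

/-!
Abstract framework for "Hypersurfaces in products of the projective line
containing generic sequences of small height" (Mavraki–Schmidt–Wilms).

`K` is a number field or the function field of a smooth projective curve over
an algebraically closed field, with a fixed algebraic closure `K̄`.  We work
throughout with the sets of `K̄`-points of the powers `(ℙ¹)^m` of the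
projective line, equipped with their Zariski topologies.
-/

open Set Filter Topology

/-- `H` is an irreducible hypersurface in the (irreducible) ambient space:
a proper closed irreducible subset which is maximal among proper closed
irreducible subsets.  For the Zariski topology on a power of `ℙ¹` this is
exactly the notion of an irreducible closed subvariety of codimension one. -/
def IsHypersurface {X : Type*} (τ : TopologicalSpace X) (H : Set X) : Prop :=
  letI := τ
  IsClosed H ∧ IsIrreducible H ∧ H ≠ Set.univ ∧
    ∀ C : Set X, IsClosed C → IsIrreducible C → H ⊆ C → C ≠ Set.univ → C = H

/-- A sequence `x` is generic in `H` if none of its subsequences is contained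
in a proper algebraic subvariety of `H`; equivalently, every proper closed
subset of `H` contains `x ℓ` for only finitely many indices `ℓ`. -/
def IsGenericSequence {X : Type*} (τ : TopologicalSpace X) (H : Set X) (x : ℕ → X) : Prop :=
  letI := τ
  (∀ ℓ, x ℓ ∈ H) ∧
    ∀ C : Set X, IsClosed C → C ⊆ H → C ≠ H → {ℓ | x ℓ ∈ C}.Finite

/-- The set `P = ℙ¹(K̄)` of `K̄`-points of the projective line, together with
the Zariski topologies on all of its finite powers `(ℙ¹)^m(K̄)`.  The powers
are irreducible, points are closed, and all reindexing maps (in particular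
all coordinate projections `π_I` and `p_j`) are morphisms of projective
varieties, hence continuous and (by properness) closed. -/
structure P1Powers where
  /-- the points `ℙ¹(K̄)` -/
  P : Type
  /-- the Zariski topology on `(ℙ¹)^m(K̄)` -/
  top : ∀ m : ℕ, TopologicalSpace (Fin m → P)
  irred : ∀ m : ℕ, @IrreducibleSpace _ (top m)
  t1 : ∀ m : ℕ, @T1Space _ (top m)
  reindex_continuous : ∀ {m k : ℕ} (φ : Fin k → Fin m),
    @Continuous _ _ (top m) (top k) (fun x => x ∘ φ)
  reindex_isClosedMap : ∀ {m k : ℕ} (φ : Fin k → Fin m),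
    @IsClosedMap _ _ (top m) (top k) (fun x => x ∘ φ)

/-- A section with closed range of a closed map is continuous. -/
theorem continuous_section_of_isClosedMap {X Y : Type*} [TopologicalSpace X] [TopologicalSpace Y]
    {f : X → Y} {s : Y → X} (hf : IsClosedMap f) (hs : ∀ y, f (s y) = y)
    (hr : IsClosed (Set.range s)) : Continuous s := by
  rw [continuous_iff_isClosed]
  intro Z hZ
  have : s ⁻¹' Z = f '' (Z ∩ Set.range s) := by
    ext y
    constructor
    · intro hy
      exact ⟨s y, ⟨hy, y, rfl⟩, hs y⟩
    · rintro ⟨_, ⟨hx, z, rfl⟩, rfl⟩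
      simpa [hs] using hx
  rw [this]
  exact hf _ (hZ.inter hr)

/-- The preimage of an irreducible set under `p_j` is irreducible: the projection is open, with
irreducible fibres. -/
theorem isIrreducible_preimage_proj (n : ℕ) (S : P1Powers) (j : Fin (n + 1))
    (C : Set (Fin n → S.P)) (hC : @IsIrreducible _ (S.top n) C) :
    @IsIrreducible _ (S.top (n + 1))
      ((fun x : Fin (n + 1) → S.P => x ∘ j.succAbove) ⁻¹' C) := by
  letI : ∀ m, TopologicalSpace (Fin m → S.P) := S.top
  haveI : ∀ m, IrreducibleSpace (Fin m → S.P) := S.irred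
  haveI : ∀ m, T1Space (Fin m → S.P) := S.t1
  have hs : ∀ t : S.P, Continuous (fun y : Fin n → S.P => (j.insertNth t y : Fin (n + 1) → S.P)) := by
    intro t
    refine continuous_section_of_isClosedMap (S.reindex_isClosedMap j.succAbove)
      (fun y => Fin.insertNth_comp_succAbove j t y) ?_
    have : Set.range (fun y : Fin n → S.P => (j.insertNth t y : Fin (n + 1) → S.P)) =
        (fun x : Fin (n + 1) → S.P => x ∘ (fun _ : Fin 1 => j)) ⁻¹' {fun _ => t} := by
      ext x
      simp only [Set.mem_range, Set.mem_preimage, Set.mem_singleton_iff]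
      constructor
      · rintro ⟨y, rfl⟩
        funext i
        simp
      · intro h
        refine ⟨x ∘ j.succAbove, ?_⟩
        rw [← congrFun h 0]
        exact Fin.insertNth_self_removeNth j x
    rw [this]
    exact isClosed_singleton.preimage (S.reindex_continuous _)
  have hfib : ∀ y : Fin n → S.P,
      (fun x : Fin (n + 1) → S.P => x ∘ j.succAbove) ⁻¹' {y} =
      Set.range (fun u : Fin 1 → S.P => (j.insertNth (u 0) y : Fin (n + 1) → S.P)) := by
    intro y
    ext x
    simp only [Set.mem_range, Set.mem_preimage, Set.mem_singleton_iff]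
    constructor
    · rintro rfl
      exact ⟨fun _ => x j, Fin.insertNth_self_removeNth j x⟩
    · rintro ⟨u, rfl⟩
      exact Fin.insertNth_comp_succAbove j _ y
  have hc : ∀ y : Fin n → S.P,
      Continuous (fun u : Fin 1 → S.P => (j.insertNth (u 0) y : Fin (n + 1) → S.P)) := by
    intro y
    refine continuous_section_of_isClosedMap (S.reindex_isClosedMap (fun _ : Fin 1 => j)) ?_ ?_
    · intro u
      funext i
      have : i = 0 := Subsingleton.elim _ _
      simp [this]
    · rw [← hfib]
      exact isClosed_singleton.preimage (S.reindex_continuous _)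
  refine hC.preimage_of_isPreirreducible_fiber _ ?_ ?_ ?_
  · intro U hU
    have : (fun x : Fin (n + 1) → S.P => x ∘ j.succAbove) '' U =
        ⋃ t : S.P, (fun y : Fin n → S.P => (j.insertNth t y : Fin (n + 1) → S.P)) ⁻¹' U := by
      ext y
      simp only [Set.mem_image, Set.mem_iUnion, Set.mem_preimage]
      constructor
      · rintro ⟨x, hx, rfl⟩
        refine ⟨x j, ?_⟩
        have h : j.insertNth (x j) (x ∘ j.succAbove) = x := Fin.insertNth_self_removeNth j x
        rwa [h]
      · rintro ⟨t, ht⟩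
        exact ⟨_, ht, Fin.insertNth_comp_succAbove j t y⟩
    rw [this]
    exact isOpen_iUnion fun t => hU.preimage (hs t)
  · intro y
    rw [hfib, ← Set.image_univ]
    exact (PreirreducibleSpace.isPreirreducible_univ).image _ (hc y).continuousOn
  · obtain ⟨y, hy⟩ := hC.1
    obtain ⟨u⟩ : Nonempty (Fin 1 → S.P) := inferInstance
    exact ⟨y, hy, j.insertNth (u 0) y, Fin.insertNth_comp_succAbove j _ y⟩

/-- If `H ⊆ (ℙ¹)^n` is an irreducible hypersurface and `j` is such that
`p_j(H) ≠ (ℙ¹)^{n-1}`, then `p_j(H)` is an irreducible hypersurface of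
`(ℙ¹)^{n-1}` and `H = p_j⁻¹(p_j(H))`; in particular `H` is isomorphic to the
product of `ℙ¹` with the irreducible hypersurface `p_j(H)` of `(ℙ¹)^{n-1}`,
via the canonical map `x ↦ (x j, p_j x)`.
(Here the ambient number of factors is `n + 1`.) -/
theorem hypersurface_of_nonsurjective_projection
    (n : ℕ) (S : P1Powers) (H : Set (Fin (n + 1) → S.P))
    (hH : IsHypersurface (S.top (n + 1)) H)
    (j : Fin (n + 1))
    (hne : (fun x : Fin (n + 1) → S.P => x ∘ j.succAbove) '' H ≠ Set.univ) :
    IsHypersurface (S.top n) ((fun x : Fin (n + 1) → S.P => x ∘ j.succAbove) '' H) ∧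
    H = (fun x : Fin (n + 1) → S.P => x ∘ j.succAbove) ⁻¹'
          ((fun x : Fin (n + 1) → S.P => x ∘ j.succAbove) '' H) ∧
    Set.BijOn (fun x : Fin (n + 1) → S.P => (x j, x ∘ j.succAbove)) H
      (Set.univ ×ˢ ((fun x : Fin (n + 1) → S.P => x ∘ j.succAbove) '' H)) := by
  have hirr := isIrreducible_preimage_proj n S j
  letI : ∀ m, TopologicalSpace (Fin m → S.P) := S.top
  haveI : ∀ m, IrreducibleSpace (Fin m → S.P) := S.irred
  obtain ⟨hcl, hI, hprop, hmax⟩ := hH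
  have hcont := S.reindex_continuous j.succAbove
  have hsurj : Function.Surjective (fun x : Fin (n + 1) → S.P => x ∘ j.succAbove) := by
    intro y
    obtain ⟨u⟩ : Nonempty (Fin 1 → S.P) := inferInstance
    exact ⟨j.insertNth (u 0) y, Fin.insertNth_comp_succAbove j _ y⟩
  have key : ∀ C : Set (Fin n → S.P), IsClosed C → IsIrreducible C →
      (fun x : Fin (n + 1) → S.P => x ∘ j.succAbove) '' H ⊆ C → C ≠ Set.univ →
      (fun x : Fin (n + 1) → S.P => x ∘ j.succAbove) ⁻¹' C = H := by
    intro C hC hCi hsub hCne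
    refine hmax _ (hC.preimage hcont) (hirr C hCi) (Set.image_subset_iff.mp hsub) ?_
    intro h
    apply hCne
    rw [← Set.image_preimage_eq C hsurj, h, Set.image_univ, hsurj.range_eq]
  have hDc := S.reindex_isClosedMap j.succAbove _ hcl
  have hDi := hI.image _ hcont.continuousOn
  have hEq := key _ hDc hDi subset_rfl hne
  refine ⟨⟨hDc, hDi, hne, ?_⟩, hEq.symm, ?_, ?_, ?_⟩
  · intro C hC hCi hsub hCne
    rw [← key C hC hCi hsub hCne, Set.image_preimage_eq C hsurj]
  · intro x hx
    exact ⟨trivial, x, hx, rfl⟩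
  · intro x _ y _ hxy
    simp only [Prod.mk.injEq] at hxy
    have h1 : j.insertNth (x j) (x ∘ j.succAbove) = x := Fin.insertNth_self_removeNth j x
    have h2 : j.insertNth (y j) (y ∘ j.succAbove) = y := Fin.insertNth_self_removeNth j y
    rw [← h1, ← h2, hxy.1, hxy.2]
  · rintro ⟨t, y⟩ ⟨_, hy⟩
    have h1 : (j.insertNth t y : Fin (n + 1) → S.P) ∘ j.succAbove = y :=
      Fin.insertNth_comp_succAbove j t y
    refine ⟨j.insertNth t y, ?_, ?_⟩
    · rw [← hEq, Set.mem_preimage]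
      simp only [h1]
      exact hy
    · simp only [h1, Fin.insertNth_apply_same]
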